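/- Let V be a finite set of even cardinality k, let c be a coloring assigning each unordered pair of distinct elements of V a color in {1,2,3}, and let M be a round-maximal perfect matching of V. Then the number of free edges with respect to M and c is at most 2·(k/2 choose 2), i.e., at most half of the number of edges of the complete graph on V that are not between two vertices of the same M-pair. -/

import Mathlib

/-!
Write `σ` for the fixed-point-free involution sending a vertex to its `M`-partner; it acts on
edges by `s(x, y) ↦ s(σ x, σ y)`. An edge `s(x, y)` outside `M` and its image cannot both be
free: otherwise replace the pairs `s(x, σ x)` and `s(y, σ y)` of `M` by `s(x, y)` and
`s(σ x, σ y)`. Both new pairs have a color smaller than the larger of the two old colors: if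
that is `3`, then `m₁ + m₂` grows, and if it is `2`, then `m₁` grows with `m₁ + m₂` unchanged.
Either way this increases `(m₁ + m₂, m₁)` lexicographically, against round-maximality
(`not_both_free`, using `isPM_swap`).

Hence the set `F` of free edges, its image `σ F`, and `M` are pairwise disjoint sets of
non-diagonal pairs. Writing `n = k / 2 = |M|`, this gives `2 |F| + n ≤ (2n choose 2)`, that is,
`|F| ≤ n (n - 1) = 2 (n choose 2)`.
-/

/-- `M` is a perfect matching of the vertex set `V`: a partition of `V` into pairs,
viewed as a finset of non-diagonal unordered pairs covering each vertex exactly once. -/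
def IsPM {V : Type*} (M : Finset (Sym2 V)) : Prop :=
  (∀ e ∈ M, ¬ e.IsDiag) ∧ ∀ x : V, ∃! e : Sym2 V, e ∈ M ∧ x ∈ e

/-- `mcount c M i` is the number of pairs of `M` having color `i` under the coloring `c`. -/
def mcount {V : Type*} (c : Sym2 V → ℕ) (M : Finset (Sym2 V)) (i : ℕ) : ℕ :=
  (M.filter fun e => c e = i).card

/-- `M` is a round-maximal perfect matching: it lexicographically maximizes
`(m₁ + m₂, m₁)` among all perfect matchings of `V`. -/
def RoundMaximal {V : Type*} (c : Sym2 V → ℕ) (M : Finset (Sym2 V)) : Prop :=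
  IsPM M ∧ ∀ M' : Finset (Sym2 V), IsPM M' →
    mcount c M' 1 + mcount c M' 2 < mcount c M 1 + mcount c M 2 ∨
    (mcount c M' 1 + mcount c M' 2 = mcount c M 1 + mcount c M 2 ∧
      mcount c M' 1 ≤ mcount c M 1)

/-- An edge `e` (a non-diagonal pair not in `M`) is free with respect to `M` and `c`
if `c e` is strictly less than the color of the `M`-pair containing at least one of
the endpoints of `e`. -/
def IsFreeEdge {V : Type*} (c : Sym2 V → ℕ) (M : Finset (Sym2 V)) (e : Sym2 V) : Prop :=
  e ∉ M ∧ ¬ e.IsDiag ∧ ∃ (x : V) (f : Sym2 V), x ∈ e ∧ f ∈ M ∧ x ∈ f ∧ c e < c f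

/-- Two pairs of a perfect matching that share a vertex coincide. -/
lemma IsPM.eq_of_mem {V : Type*} {M : Finset (Sym2 V)} (hM : IsPM M) {x : V} {e f : Sym2 V}
    (he : e ∈ M) (hf : f ∈ M) (hxe : x ∈ e) (hxf : x ∈ f) : e = f :=
  (hM.2 x).unique ⟨he, hxe⟩ ⟨hf, hxf⟩

/-- A perfect matching is given by a fixed-point-free involution sending each vertex to its
partner. -/
lemma IsPM.exists_partner {V : Type*} {M : Finset (Sym2 V)} (hM : IsPM M) :
    ∃ σ : V → V, (∀ x, s(x, σ x) ∈ M) ∧ (∀ x, σ x ≠ x) ∧ Function.Involutive σ := by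
  have h : ∀ x : V, ∃ y, s(x, y) ∈ M := by
    intro x
    obtain ⟨e, ⟨he, y, rfl⟩, -⟩ := hM.2 x
    exact ⟨y, he⟩
  choose σ hσ using h
  have hne : ∀ x, σ x ≠ x := fun x hx => hM.1 _ (hσ x) (by simp [hx])
  refine ⟨σ, hσ, hne, fun x => ?_⟩
  have h1 := hM.eq_of_mem (hσ (σ x)) (hσ x) (x := σ x) (by simp) (by simp)
  rw [Sym2.eq_swap] at h1
  exact Sym2.congr_left.1 h1

lemma mcount_insert {V : Type*} [DecidableEq V] (c : Sym2 V → ℕ) {S : Finset (Sym2 V)}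
    {e : Sym2 V} (he : e ∉ S) (i : ℕ) :
    mcount c (insert e S) i = mcount c S i + if c e = i then 1 else 0 := by
  unfold mcount
  rw [Finset.filter_insert]
  split_ifs with h
  · rw [Finset.card_insert_of_notMem (by simp [he])]
  · rfl

/-- Replacing the pairs `s(x, σ x)` and `s(y, σ y)` by `s(x, y)` and `s(σ x, σ y)` in a perfect
matching gives a perfect matching. -/
lemma isPM_swap {V : Type*} [DecidableEq V] {M : Finset (Sym2 V)} (hM : IsPM M) {σ : V → V}
    (hσ : ∀ x, s(x, σ x) ∈ M) (hne : ∀ x, σ x ≠ x) (hinv : Function.Involutive σ) {x y : V}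
    (hxy : x ≠ y) (hxy' : σ x ≠ y) :
    IsPM (insert s(x, y) (insert s(σ x, σ y) ((M.erase s(x, σ x)).erase s(y, σ y)))) := by
  have hx := hne x
  have hy := hne y
  have hσσ : σ x ≠ σ y := fun h => hxy (hinv.injective h)
  have hxσ : x ≠ σ y := fun h => hxy' (by rw [h, hinv])
  have key : ∀ z e, e ∈ M → z ∈ e → e = s(z, σ z) := fun z e he hz =>
    hM.eq_of_mem he (hσ z) hz (by simp)
  have hix : σ (σ x) = x := hinv x
  have hiy : σ (σ y) = y := hinv y
  refine ⟨?_, fun z => ?_⟩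
  · intro e he
    simp only [Finset.mem_insert, Finset.mem_erase] at he
    rcases he with rfl | rfl | he
    · simpa using hxy
    · simpa using hσσ
    · exact hM.1 e he.2.2
  · by_cases h1 : z = x ∨ z = y
    · refine ⟨s(x, y), ⟨by simp, by simpa using h1⟩, ?_⟩
      rintro e ⟨he, hz⟩
      simp only [Finset.mem_insert, Finset.mem_erase] at he
      rcases he with rfl | rfl | ⟨h3, h4, h5⟩
      · rfl
      · simp only [Sym2.mem_iff] at hz
        grind
      · have := key z e h5 hz
        rcases h1 with rfl | rfl <;> contradiction
    · by_cases h2 : z = σ x ∨ z = σ y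
      · refine ⟨s(σ x, σ y), ⟨by simp, by simpa using h2⟩, ?_⟩
        rintro e ⟨he, hz⟩
        simp only [Finset.mem_insert, Finset.mem_erase] at he
        rcases he with rfl | rfl | ⟨h3, h4, h5⟩
        · simp only [Sym2.mem_iff] at hz
          contradiction
        · rfl
        · have := key z e h5 hz
          rcases h2 with rfl | rfl
          · rw [hix, Sym2.eq_swap] at this
            contradiction
          · rw [hiy, Sym2.eq_swap] at this
            contradiction
      · refine ⟨s(z, σ z), ⟨?_, by simp⟩, ?_⟩
        · simp only [Finset.mem_insert, Finset.mem_erase]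
          refine Or.inr (Or.inr ⟨?_, ?_, hσ z⟩)
          · intro h
            have : z ∈ s(y, σ y) := h ▸ Sym2.mem_mk_left _ _
            simp only [Sym2.mem_iff] at this
            tauto
          · intro h
            have : z ∈ s(x, σ x) := h ▸ Sym2.mem_mk_left _ _
            simp only [Sym2.mem_iff] at this
            tauto
        · rintro e ⟨he, hz⟩
          simp only [Finset.mem_insert, Finset.mem_erase] at he
          rcases he with rfl | rfl | he
          · simp only [Sym2.mem_iff] at hz
            contradiction
          · simp only [Sym2.mem_iff] at hz
            contradiction
          · exact key z e he.2.2 hz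

/-- A free edge has a smaller color than one of the pairs at its two endpoints. -/
lemma IsFreeEdge.lt {V : Type*} {c : Sym2 V → ℕ} {M : Finset (Sym2 V)} (hM : IsPM M)
    {x y x' y' : V} (hx : s(x, x') ∈ M) (hy : s(y, y') ∈ M) (h : IsFreeEdge c M s(x, y)) :
    c s(x, y) < c s(x, x') ∨ c s(x, y) < c s(y, y') := by
  obtain ⟨-, -, z, f, hz, hf, hzf, hlt⟩ := h
  simp only [Sym2.mem_iff] at hz
  rcases hz with rfl | rfl
  · exact Or.inl (hM.eq_of_mem hf hx hzf (by simp) ▸ hlt)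
  · exact Or.inr (hM.eq_of_mem hf hy hzf (by simp) ▸ hlt)

/-- An edge and its image under the partner involution are not both free: otherwise swapping them
into the matching would improve it. -/
lemma not_both_free {V : Type*} [DecidableEq V] {c : Sym2 V → ℕ}
    (hc : ∀ e : Sym2 V, ¬ e.IsDiag → c e ∈ ({1, 2, 3} : Set ℕ))
    {M : Finset (Sym2 V)} (hM : RoundMaximal c M) {σ : V → V}
    (hσ : ∀ x, s(x, σ x) ∈ M) (hne : ∀ x, σ x ≠ x) (hinv : Function.Involutive σ) {x y : V}
    (h1 : IsFreeEdge c M s(x, y)) (h2 : IsFreeEdge c M s(σ x, σ y)) : False := by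
  have hxy : x ≠ y := by simpa using h1.2.1
  have hxy' : σ x ≠ y := by
    rintro rfl
    exact h1.1 (hσ x)
  have hfg : s(y, σ y) ≠ s(x, σ x) := by
    intro h
    have : y ∈ s(x, σ x) := h ▸ Sym2.mem_mk_left _ _
    simp only [Sym2.mem_iff] at this
    rcases this with h | h
    · exact hxy h.symm
    · exact hxy' h.symm
  have hee : s(x, y) ≠ s(σ x, σ y) := by
    intro h
    have : x ∈ s(σ x, σ y) := h ▸ Sym2.mem_mk_left _ _
    simp only [Sym2.mem_iff] at this
    rcases this with h | h
    · exact hne x h.symm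
    · exact hxy' (by rw [h, hinv])
  have hmax := hM.2 _ (isPM_swap hM.1 hσ hne hinv hxy hxy')
  have l1 := h1.lt hM.1 (hσ x) (hσ y)
  have l2 := h2.lt hM.1 (x' := x) (y' := y) (by rw [Sym2.eq_swap]; exact hσ x)
    (by rw [Sym2.eq_swap]; exact hσ y)
  rw [Sym2.eq_swap (a := σ x) (b := x), Sym2.eq_swap (a := σ y) (b := y)] at l2
  have c1 := hc _ h1.2.1
  have c2 := hc _ h2.2.1
  have c3 := hc _ (hM.1.1 _ (hσ x))
  have c4 := hc _ (hM.1.1 _ (hσ y))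
  set R := (M.erase s(x, σ x)).erase s(y, σ y) with hR
  have hMR : M = insert s(x, σ x) (insert s(y, σ y) R) := by
    rw [hR, Finset.insert_erase (Finset.mem_erase.2 ⟨hfg, hσ y⟩), Finset.insert_erase (hσ x)]
  have m1 : ∀ i, mcount c M i = mcount c R i + (if c s(y, σ y) = i then 1 else 0) +
      if c s(x, σ x) = i then 1 else 0 := by
    intro i
    conv_lhs => rw [hMR]
    rw [mcount_insert c (by simp [hR, hfg.symm]), mcount_insert c (by simp [hR])]
  have m2 : ∀ i, mcount c (insert s(x, y) (insert s(σ x, σ y) R)) i =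
      mcount c R i + (if c s(σ x, σ y) = i then 1 else 0) +
      if c s(x, y) = i then 1 else 0 := by
    intro i
    rw [mcount_insert c (by simp only [Finset.mem_insert, hR, Finset.mem_erase, h1.1, hee]; simp),
      mcount_insert c (by simp only [hR, Finset.mem_erase, h2.1]; simp)]
  rw [m1, m1, m2, m2] at hmax
  simp only [Set.mem_insert_iff, Set.mem_singleton_iff] at c1 c2 c3 c4
  clear m1 m2 hMR
  generalize c s(x, y) = a1 at *
  generalize c s(σ x, σ y) = a2 at *
  generalize c s(x, σ x) = a3 at *
  generalize c s(y, σ y) = a4 at *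
  rcases c1 with rfl | rfl | rfl <;> rcases c2 with rfl | rfl | rfl <;>
    rcases c3 with rfl | rfl | rfl <;> rcases c4 with rfl | rfl | rfl <;>
    simp at hmax l1 l2 <;> omega

lemma IsPM.two_mul_card {V : Type*} [Fintype V] [DecidableEq V] {M : Finset (Sym2 V)}
    (hM : IsPM M) : 2 * M.card = Fintype.card V := by
  have h : M.biUnion Sym2.toFinset = Finset.univ := by
    ext x
    obtain ⟨e, he, -⟩ := hM.2 x
    simpa using ⟨e, he⟩
  rw [← Finset.card_univ, ← h, Finset.card_biUnion,
    Finset.sum_congr rfl fun e he => Sym2.card_toFinset_of_not_isDiag e (hM.1 e he)]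
  · simp [mul_comm]
  · intro e he f hf hef
    rw [Function.onFun, Finset.disjoint_left]
    intro x hxe hxf
    exact hef (hM.eq_of_mem he hf (by simpa using hxe) (by simpa using hxf))

/-- Let `V` be a finite set of even cardinality `k`, `c` a coloring of edges by colors
in `{1,2,3}`, and `M` a round-maximal perfect matching. Then the number of free edges
with respect to `M` and `c` is at most `2·(k/2 choose 2)`. -/
theorem stmt_11 {V : Type*} [Fintype V] [DecidableEq V]
    (k : ℕ) (hk : Fintype.card V = k) (hEven : Even k)
    (c : Sym2 V → ℕ)
    (hc : ∀ e : Sym2 V, ¬ e.IsDiag → c e ∈ ({1, 2, 3} : Set ℕ))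
    (M : Finset (Sym2 V)) (hM : RoundMaximal c M) :
    {e : Sym2 V | IsFreeEdge c M e}.ncard ≤ 2 * Nat.choose (k / 2) 2 := by
  classical
  obtain ⟨σ, hσ, hne, hinv⟩ := hM.1.exists_partner
  have hcard := hM.1.two_mul_card
  set F : Finset (Sym2 V) := Finset.univ.filter (IsFreeEdge c M) with hF
  have hset : {e : Sym2 V | IsFreeEdge c M e} = (F : Set (Sym2 V)) := by
    ext e
    simp [hF]
  rw [hset, Set.ncard_coe_finset]
  set G := F.image (Sym2.map σ) with hG
  have hGF : G.card = F.card := Finset.card_image_of_injective _ (Sym2.map.injective hinv.injective)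
  have hFG : Disjoint F G := by
    rw [Finset.disjoint_left]
    intro e he he'
    obtain ⟨f, hf, rfl⟩ := Finset.mem_image.1 he'
    induction f with | _ x y => ?_
    exact not_both_free hc hM hσ hne hinv (Finset.mem_filter.1 hf).2 (Finset.mem_filter.1 he).2
  have hFGM : Disjoint (F ∪ G) M := by
    rw [Finset.disjoint_left]
    intro e he heM
    rcases Finset.mem_union.1 he with he | he
    · exact (Finset.mem_filter.1 he).2.1 heM
    · obtain ⟨f, hf, rfl⟩ := Finset.mem_image.1 he
      induction f with | _ x y => ?_
      -- If `s(σ x, σ y) ∈ M`, then `σ y` is the partner `x` of `σ x`, so `s(x, y) ∈ M`.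
      rw [Sym2.map_mk] at heM
      have h := hM.1.eq_of_mem heM (hσ (σ x)) (x := σ x) (by simp) (by simp)
      have h' : σ y = x := (Sym2.congr_right.1 h).trans (hinv x)
      apply (Finset.mem_filter.1 hf).2.1
      rw [← h', Sym2.eq_swap]
      exact hσ y
  have hsub : (F ∪ G) ∪ M ⊆ Finset.univ.filter fun e : Sym2 V => ¬ e.IsDiag := by
    intro e he
    refine Finset.mem_filter.2 ⟨Finset.mem_univ _, ?_⟩
    rcases Finset.mem_union.1 he with he | he
    · rcases Finset.mem_union.1 he with he | he
      · exact (Finset.mem_filter.1 he).2.2.1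
      · obtain ⟨f, hf, rfl⟩ := Finset.mem_image.1 he
        rw [Sym2.isDiag_map hinv.injective]
        exact (Finset.mem_filter.1 hf).2.2.1
    · exact hM.1.1 e he
  have hle := Finset.card_le_card hsub
  rw [Finset.card_union_of_disjoint hFGM, Finset.card_union_of_disjoint hFG, hGF,
    ← Fintype.card_subtype (fun e : Sym2 V => ¬ e.IsDiag), Sym2.card_subtype_not_diag,
    ← hcard] at hle
  have hk2 : k / 2 = M.card := by omega
  rw [hk2]
  have e1 : (((2 * M.card).choose 2 : ℕ) : ℚ) = M.card + 4 * (M.card.choose 2 : ℕ) := by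
    rw [Nat.cast_choose_two, Nat.cast_choose_two]
    push_cast
    ring
  have e2 : (2 * M.card).choose 2 = M.card + 4 * M.card.choose 2 := by exact_mod_cast e1
  omega
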